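/- There exists a constant q₀ ∈ (0,1) such that for every q ∈ (q₀,1), every k ≥ 1 and every finite sequence of positive reals x₁, …, x_k, one has (x₁ + ⋯ + x_k)^q ≥ Σ_{i=1}^k x_i^q − (1−q) Σ_{i≠j} (x_i x_j)^{q/2}, where the last sum ranges over all ordered pairs (i,j) with 1 ≤ i, j ≤ k and i ≠ j. -/

import Mathlib

/-!
Put `S = ∑ xᵢ`, `M = ∑ xᵢ ^ (q / 2)` and `Q = ∑ xᵢ ^ q`. The sum over the pairs `i ≠ j` is `M² - Q`,
so the claim reads `(2 - q) Q ≤ (1 - q) M² + S ^ q`. The exponent `q` lies between `q / 2` and `1`,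
and power sums are log-convex in the exponent, so `Q` is at most a weighted geometric mean of `M²`
and `S ^ q`, with weights `(1 - q) / (2 - q)` and `1 / (2 - q)`. The AM-GM inequality concludes.
-/

section PowerSums

variable {ι : Type*} {s : Finset ι}

theorem sum_rpow_mul_rpow_le_of_add_eq_one {f g : ι → ℝ} (hf : ∀ i ∈ s, 0 ≤ f i)
    (hg : ∀ i ∈ s, 0 ≤ g i) {a b : ℝ} (ha : 0 ≤ a) (hb : 0 ≤ b) (hab : a + b = 1) :
    ∑ i ∈ s, f i ^ a * g i ^ b ≤ (∑ i ∈ s, f i) ^ a * (∑ i ∈ s, g i) ^ b := by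
  obtain rfl | ha := ha.eq_or_lt
  · obtain rfl : b = 1 := by simpa using hab
    simp
  obtain rfl | hb := hb.eq_or_lt
  · obtain rfl : a = 1 := by simpa using hab
    simp
  have hconj : (a⁻¹).HolderConjugate b⁻¹ := .inv_inv ha hb hab
  calc
    _ ≤ (∑ i ∈ s, (f i ^ a) ^ a⁻¹) ^ (1 / a⁻¹) * (∑ i ∈ s, (g i ^ b) ^ b⁻¹) ^ (1 / b⁻¹) :=
      Real.inner_le_Lp_mul_Lq_of_nonneg s hconj (fun i hi ↦ Real.rpow_nonneg (hf i hi) a)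
        fun i hi ↦ Real.rpow_nonneg (hg i hi) b
    _ = _ := by
      rw [one_div, one_div, inv_inv, inv_inv,
        Finset.sum_congr rfl fun i hi ↦ Real.rpow_rpow_inv (hf i hi) ha.ne',
        Finset.sum_congr rfl fun i hi ↦ Real.rpow_rpow_inv (hg i hi) hb.ne']

theorem sum_rpow_convexComb_le {x : ι → ℝ} (hx : ∀ i ∈ s, 0 ≤ x i) {p r : ℝ} (hp : 0 ≤ p)
    (hr : 0 ≤ r) {a b : ℝ} (ha : 0 ≤ a) (hb : 0 ≤ b) (hab : a + b = 1) :
    ∑ i ∈ s, x i ^ (p * a + r * b) ≤ (∑ i ∈ s, x i ^ p) ^ a * (∑ i ∈ s, x i ^ r) ^ b := by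
  refine le_of_eq_of_le (Finset.sum_congr rfl fun i hi ↦ ?_) <|
    sum_rpow_mul_rpow_le_of_add_eq_one (fun i hi ↦ Real.rpow_nonneg (hx i hi) p)
      (fun i hi ↦ Real.rpow_nonneg (hx i hi) r) ha hb hab
  rw [Real.rpow_add_of_nonneg (hx i hi) (by positivity) (by positivity),
    Real.rpow_mul (hx i hi), Real.rpow_mul (hx i hi)]

theorem sum_rpow_le_sq_rpow_mul_rpow {x : ι → ℝ} (hx : ∀ i ∈ s, 0 ≤ x i) {q : ℝ} (hq₀ : 0 ≤ q)
    (hq₁ : q ≤ 1) :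
    ∑ i ∈ s, x i ^ q ≤
      ((∑ i ∈ s, x i ^ (q / 2)) ^ 2) ^ ((1 - q) / (2 - q)) *
        ((∑ i ∈ s, x i) ^ q) ^ (1 / (2 - q)) := by
  have : 0 ≤ 1 - q := sub_nonneg.2 hq₁
  have h2q : 0 < 2 - q := by linarith
  have sum_half_nonneg : 0 ≤ ∑ i ∈ s, x i ^ (q / 2) :=
    Finset.sum_nonneg fun i hi ↦ Real.rpow_nonneg (hx i hi) _
  have weights_add : 2 * ((1 - q) / (2 - q)) + q * (1 / (2 - q)) = 1 := by
    field_simp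
    ring
  have exponent_eq : q / 2 * (2 * ((1 - q) / (2 - q))) + 1 * (q * (1 / (2 - q))) = q := by
    field_simp
    ring
  rw [← Real.rpow_two, ← Real.rpow_mul sum_half_nonneg, ← Real.rpow_mul (Finset.sum_nonneg hx)]
  simpa only [exponent_eq, Real.rpow_one] using
    sum_rpow_convexComb_le hx (p := q / 2) (r := 1) (by positivity) zero_le_one
      (by positivity) (by positivity) weights_add

theorem two_sub_mul_sum_rpow_le {x : ι → ℝ} (hx : ∀ i ∈ s, 0 ≤ x i) {q : ℝ} (hq₀ : 0 ≤ q)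
    (hq₁ : q ≤ 1) :
    (2 - q) * ∑ i ∈ s, x i ^ q ≤
      (1 - q) * (∑ i ∈ s, x i ^ (q / 2)) ^ 2 + (∑ i ∈ s, x i) ^ q := by
  set S := ∑ i ∈ s, x i
  set M := ∑ i ∈ s, x i ^ (q / 2)
  have : 0 ≤ 1 - q := sub_nonneg.2 hq₁
  have h2q : 0 < 2 - q := by linarith
  have weights_add : (1 - q) / (2 - q) + 1 / (2 - q) = 1 := by
    field_simp
    ring
  calc
    (2 - q) * ∑ i ∈ s, x i ^ q
      ≤ (2 - q) * ((M ^ 2) ^ ((1 - q) / (2 - q)) * (S ^ q) ^ (1 / (2 - q))) := by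
      gcongr
      exact sum_rpow_le_sq_rpow_mul_rpow hx hq₀ hq₁
    _ ≤ (2 - q) * ((1 - q) / (2 - q) * M ^ 2 + 1 / (2 - q) * S ^ q) := by
      gcongr
      exact Real.geom_mean_le_arith_mean2_weighted (by positivity) (by positivity) (sq_nonneg M)
        (Real.rpow_nonneg (Finset.sum_nonneg hx) q) weights_add
    _ = (1 - q) * M ^ 2 + S ^ q := by field_simp

end PowerSums

theorem sum_sum_ite_ne_mul_eq_sq_sub {ι R : Type*} [DecidableEq ι] [CommRing R] (s : Finset ι)
    (f : ι → R) :
    (∑ i ∈ s, ∑ j ∈ s, if i ≠ j then f i * f j else 0) =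
      (∑ i ∈ s, f i) ^ 2 - ∑ i ∈ s, f i ^ 2 := by
  rw [sq, Finset.sum_mul_sum, ← Finset.sum_sub_distrib]
  refine Finset.sum_congr rfl fun i hi ↦ ?_
  rw [← Finset.sum_filter, Finset.filter_ne, Finset.sum_erase_eq_sub hi, sq]

theorem stmt_1_general {ι : Type*} [DecidableEq ι] {s : Finset ι} {x : ι → ℝ}
    (hx : ∀ i ∈ s, 0 ≤ x i) {q : ℝ} (hq₀ : 0 ≤ q) (hq₁ : q ≤ 1) :
    ∑ i ∈ s, x i ^ q -
        (1 - q) * ∑ i ∈ s, ∑ j ∈ s, (if i ≠ j then (x i * x j) ^ (q / 2) else 0) ≤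
      (∑ i ∈ s, x i) ^ q := by
  have sum_sq : ∑ i ∈ s, (x i ^ (q / 2)) ^ 2 = ∑ i ∈ s, x i ^ q :=
    Finset.sum_congr rfl fun i hi ↦ by
      rw [← Real.rpow_mul_natCast (hx i hi), Nat.cast_two, div_mul_cancel₀ q two_ne_zero]
  have sum_pairs : (∑ i ∈ s, ∑ j ∈ s, if i ≠ j then (x i * x j) ^ (q / 2) else 0) =
      (∑ i ∈ s, x i ^ (q / 2)) ^ 2 - ∑ i ∈ s, x i ^ q := by
    rw [← sum_sq, ← sum_sum_ite_ne_mul_eq_sq_sub]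
    exact Finset.sum_congr rfl fun i hi ↦ Finset.sum_congr rfl fun j hj ↦ by
      rw [Real.mul_rpow (hx i hi) (hx j hj)]
  rw [sum_pairs]
  linarith [two_sub_mul_sum_rpow_le hx hq₀ hq₁]

/-- There exists `q₀ ∈ (0,1)` such that for every `q ∈ (q₀,1)`, every `k ≥ 1` and all
positive reals `x₁, …, x_k`,
`(x₁ + ⋯ + x_k)^q ≥ Σ x_i^q − (1−q) Σ_{i≠j} (x_i x_j)^{q/2}`. -/
theorem stmt_1 :
    ∃ q₀ ∈ Set.Ioo (0 : ℝ) 1, ∀ q ∈ Set.Ioo q₀ 1, ∀ k : ℕ, 1 ≤ k → ∀ x : Fin k → ℝ,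
      (∀ i, 0 < x i) →
      (∑ i, x i) ^ q ≥
        ∑ i, x i ^ q - (1 - q) * ∑ i, ∑ j, if i ≠ j then (x i * x j) ^ (q / 2) else 0 :=
  ⟨1 / 2, by norm_num, fun _ hq _ _ _ hx ↦
    stmt_1_general (fun i _ ↦ (hx i).le) (one_half_pos.trans hq.1).le hq.2.le⟩
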